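/- arXiv:1210.2938 — 2 statements merged into one kernel-verified Lean document; each statement's English description precedes it below -/
import Mathlib

section
/- Let α, u : ℝ → ℝ be smooth (C^∞) and let i ≥ 0. Then for every x ∈ ℝ, e^{−α(x)} · (d/dx)^i ( e^{α} u )(x) = Σ_{k=0}^{i} C(i,k) · B_{i−k}(α'(x), α''(x), …, α^{(i−k)}(x)) · u^{(k)}(x), where B_n is the n-th complete Bell polynomial, B_0 = 1, and C(i,k) is the binomial coefficient. Equivalently, the gauge transformation of the operator D_x^i by e^{α} equals Σ_{k=0}^{i} C(i,k) B_{i−k}(α_x, α_{xx}, …, ∂_x^{i−k}α) D_x^k. -/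
/-!
By the Leibniz rule, `(e^α u)^{(i)} = ∑ C(i,k) (e^α)^{(i-k)} u^{(k)}`, so the claim reduces to
`(e^α)^{(n)} = e^α B_n(α', …, α^{(n)})` (`iteratedDeriv_exp_comp`). Differentiating `(e^α)' = α' e^α`
shows that `e^{-α} (e^α)^{(n)}` obeys `Y_{n+1} = ∑ C(n,k) α^{(k+1)} Y_{n-k}`, and the complete Bell
polynomials obey the same recursion (`bellComplete_succ`).

The latter holds because `B_n / n!` is the coefficient of `t ^ n` in `exp (∑ a_m t ^ m)` with
`a_m = x_m / m!`, that is, the sum of `∏ a_m ^ j_m / j_m!` over all tuples with `∑ m j_m = n`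
(`bellComplete_eq`). Weighting each such term by `n = ∑ m j_m` and lowering the exponent `j_m` by one
gives the recursion (`succ_mul_expCoeff_succ`).
-/


/-- The partial Bell polynomial `B_{n,k}(x_1, …, x_{n-k+1})`, a sum over all
sequences `(j_1, …, j_{n-k+1})` of nonnegative integers with
`j_1 + ⋯ + j_{n-k+1} = k` and `j_1 + 2 j_2 + ⋯ + (n-k+1) j_{n-k+1} = n`.
The argument `x m` is `x_m` (indices `1, …, n-k+1` are used). -/
noncomputable def bellPartial (n k : ℕ) (x : ℕ → ℝ) : ℝ :=
  ∑ j ∈ Finset.univ.filter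
      (fun j : Fin (n - k + 1) → Fin (n + 1) =>
        (∑ m : Fin (n - k + 1), (j m : ℕ)) = k ∧
        (∑ m : Fin (n - k + 1), ((m : ℕ) + 1) * (j m : ℕ)) = n),
    ((n.factorial : ℝ) / ∏ m : Fin (n - k + 1), ((j m : ℕ).factorial : ℝ)) *
      ∏ m : Fin (n - k + 1), (x ((m : ℕ) + 1) / (((m : ℕ) + 1).factorial : ℝ)) ^ ((j m : ℕ))

/-- The complete Bell polynomial `B_n(x_1, …, x_n) = ∑_{k=1}^n B_{n,k}`, with `B_0 = 1`. -/
noncomputable def bellComplete (n : ℕ) (x : ℕ → ℝ) : ℝ :=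
  if n = 0 then 1 else ∑ k ∈ Finset.Icc 1 n, bellPartial n k x

/-! ### Coefficients of the exponential of a polynomial -/

/-- The exponent tuples `(j_1, …, j_N)` of weight `j_1 + 2 j_2 + ⋯ + N j_N = n`, with `j_{m+1}` stored at
index `m : Fin N`. The bound `j m ≤ n`, implied by the weight condition, only makes the set finite. -/
def weightedTuples (N n : ℕ) : Finset (Fin N → ℕ) :=
  (Fintype.piFinset fun _ => Finset.range (n + 1)).filter fun j =>
    ∑ m : Fin N, ((m : ℕ) + 1) * j m = n

lemma mem_weightedTuples {N n : ℕ} {j : Fin N → ℕ} :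
    j ∈ weightedTuples N n ↔ ∑ m : Fin N, ((m : ℕ) + 1) * j m = n := by
  simp only [weightedTuples, Finset.mem_filter, Fintype.mem_piFinset, Finset.mem_range,
    and_iff_right_iff_imp]
  intro h m
  have := Finset.single_le_sum (f := fun m : Fin N => ((m : ℕ) + 1) * j m)
    (fun _ _ => Nat.zero_le _) (Finset.mem_univ m)
  simp only [h] at this
  nlinarith

/-- The monomial `∏ a_m ^ j_m / j_m!` attached to an exponent tuple, for `m = 1, …, N`. -/
noncomputable def tupleWeight {N : ℕ} (a : ℕ → ℝ) (j : Fin N → ℕ) : ℝ :=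
  ∏ m : Fin N, a (m + 1) ^ j m / ((j m).factorial : ℝ)

/-- The coefficient of `t ^ n` in `exp (a_1 t + ⋯ + a_N t ^ N)`. -/
noncomputable def expCoeff (N : ℕ) (a : ℕ → ℝ) (n : ℕ) : ℝ :=
  ∑ j ∈ weightedTuples N n, tupleWeight a j

lemma expCoeff_zero (N : ℕ) (a : ℕ → ℝ) : expCoeff N a 0 = 1 := by
  have : weightedTuples N 0 = {0} := by
    ext j
    simp [mem_weightedTuples, funext_iff]
  simp [expCoeff, this, tupleWeight]

lemma tupleWeight_add_single {N : ℕ} (a : ℕ → ℝ) (j : Fin N → ℕ) (m : Fin N) :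
    ((j m : ℝ) + 1) * tupleWeight a (j + Pi.single m 1) = a (m + 1) * tupleWeight a j := by
  unfold tupleWeight
  rw [← Finset.mul_prod_erase _ _ (Finset.mem_univ m),
    ← Finset.mul_prod_erase _ (fun l : Fin N => a (l + 1) ^ j l / ((j l).factorial : ℝ))
      (Finset.mem_univ m)]
  have h : ∏ l ∈ Finset.univ.erase m, a (l + 1) ^ (j + Pi.single m 1 : Fin N → ℕ) l /
        (((j + Pi.single m 1 : Fin N → ℕ) l).factorial : ℝ) =
      ∏ l ∈ Finset.univ.erase m, a (l + 1) ^ j l / ((j l).factorial : ℝ) := by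
    refine Finset.prod_congr rfl fun l hl => ?_
    simp [Pi.single_eq_of_ne (Finset.ne_of_mem_erase hl)]
  rw [h, ← mul_assoc, ← mul_assoc]
  congr 1
  have h1 : ((j m : ℝ) + 1) ≠ 0 := by positivity
  have h2 : ((j m).factorial : ℝ) ≠ 0 := by positivity
  simp only [Pi.add_apply, Pi.single_eq_same, Nat.factorial_succ, pow_succ]
  push_cast
  field_simp

lemma sum_weight_add_single {N : ℕ} (j : Fin N → ℕ) (m : Fin N) :
    ∑ l : Fin N, ((l : ℕ) + 1) * (j + Pi.single m 1 : Fin N → ℕ) l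
      = ∑ l : Fin N, ((l : ℕ) + 1) * j l + (m + 1) := by
  simp [mul_add, Finset.sum_add_distrib, Pi.single_apply]

/-- The coefficient form of `a_m ∂/∂a_m exp P = a_m t ^ m exp P`, where `P = a_1 t + ⋯ + a_N t ^ N`: tuples
with `j_m ≥ 1` arise uniquely from tuples of smaller weight by raising the `m`-th exponent.
In the statement the index `m : Fin N` stands for the variable `a_{m+1}`. -/
lemma sum_apply_mul_tupleWeight (N : ℕ) (a : ℕ → ℝ) (n : ℕ) (m : Fin N) :
    ∑ j ∈ weightedTuples N n, (j m : ℝ) * tupleWeight a j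
      = if (m : ℕ) + 1 ≤ n then a (m + 1) * expCoeff N a (n - (m + 1)) else 0 := by
  split_ifs with hmn
  · rw [expCoeff, Finset.mul_sum]
    symm
    refine Finset.sum_of_injOn (fun j => j + Pi.single m 1)
      (fun _ _ _ _ h => add_right_cancel h) ?_ ?_ ?_
    · intro j hj
      simp only [Finset.mem_coe, mem_weightedTuples] at hj ⊢
      rw [sum_weight_add_single, hj]
      omega
    · intro j hj hj'
      have : j m = 0 := by
        by_contra h0
        apply hj'
        have hs : j - Pi.single m 1 + Pi.single m 1 = j := by
          ext l
          by_cases hl : l = m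
          · subst hl
            simp
            omega
          · simp [hl]
        refine ⟨j - Pi.single m 1, ?_, hs⟩
        have := sum_weight_add_single (j - Pi.single m 1) m
        rw [hs, mem_weightedTuples.1 hj] at this
        simp only [Finset.mem_coe, mem_weightedTuples]
        omega
      simp [this]
    · intro j _
      rw [← tupleWeight_add_single]
      simp
  · refine Finset.sum_eq_zero fun j hj => ?_
    have h := Finset.single_le_sum (f := fun m : Fin N => ((m : ℕ) + 1) * j m)
      (fun _ _ => Nat.zero_le _) (Finset.mem_univ m)
    rw [mem_weightedTuples.1 hj] at h
    have : j m = 0 := by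
      by_contra h0
      have := Nat.le_mul_of_pos_right ((m : ℕ) + 1) (Nat.pos_of_ne_zero h0)
      omega
    simp [this]

/-- The coefficient form of `(exp P)' = P' exp P`, for `P = a_1 t + ⋯ + a_N t ^ N` with `n + 1 ≤ N`. -/
lemma succ_mul_expCoeff_succ {N n : ℕ} (hn : n < N) (a : ℕ → ℝ) :
    ((n : ℝ) + 1) * expCoeff N a (n + 1)
      = ∑ m ∈ Finset.range (n + 1), ((m : ℝ) + 1) * a (m + 1) * expCoeff N a (n - m) := by
  have h : ((n : ℝ) + 1) * expCoeff N a (n + 1)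
      = ∑ m : Fin N, ((m : ℝ) + 1) *
          ∑ j ∈ weightedTuples N (n + 1), (j m : ℝ) * tupleWeight a j := by
    simp_rw [Finset.mul_sum]
    rw [Finset.sum_comm, expCoeff, Finset.mul_sum]
    refine Finset.sum_congr rfl fun j hj => ?_
    have hj' : ((n : ℝ) + 1) = ∑ m : Fin N, ((m : ℝ) + 1) * (j m : ℝ) := by
      exact_mod_cast (mem_weightedTuples.1 hj).symm
    rw [hj', Finset.sum_mul]
    exact Finset.sum_congr rfl fun m _ => by ring
  rw [h]
  simp_rw [sum_apply_mul_tupleWeight]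
  rw [Fin.sum_univ_eq_sum_range (fun m => ((m : ℝ) + 1) *
    if m + 1 ≤ n + 1 then a (m + 1) * expCoeff N a (n + 1 - (m + 1)) else 0) N]
  symm
  refine Finset.sum_subset_zero_on_sdiff (Finset.range_mono hn) ?_ ?_
  · intro m hm
    have : ¬ m ≤ n := by simp at hm; omega
    simp [this]
  · intro m hm
    have : m ≤ n := by simp at hm; omega
    simp [this]
    ring

/-! ### The recursion for complete Bell polynomials -/

/-- The tuples in `bellPartial n k` have length `n - k + 1`; padded with zeros to a common length `N`,
they are exactly the tuples of weight `n` with `k` parts. -/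
lemma bellPartial_eq {N n k : ℕ} (hk : 1 ≤ k) (hkn : k ≤ n) (hN : n ≤ N) (x : ℕ → ℝ) :
    bellPartial n k x = n.factorial *
      ∑ j ∈ (weightedTuples N n).filter (fun j => ∑ m, j m = k),
        tupleWeight (fun m => x m / (m.factorial : ℝ)) j := by
  have hL : n - k + 1 ≤ N := by omega
  -- `E` extends a tuple by zero. It is onto because the two constraints give `∑ m * j m = n - k`
  -- (indices from `0`), so `j` vanishes at every index beyond `n - k`.
  let E : (Fin (n - k + 1) → Fin (n + 1)) → Fin N → ℕ :=
    fun j m => if h : (m : ℕ) < n - k + 1 then (j ⟨m, h⟩ : ℕ) else 0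
  have hE : ∀ j m, E j (Fin.castLE hL m) = j m := fun j m => by
    simp only [E, Fin.val_castLE, dif_pos m.isLt]
  have hE0 : ∀ j, ∀ m ∉ Set.range (Fin.castLE hL), E j m = 0 := by
    intro j m hm
    have : ¬ (m : ℕ) < n - k + 1 := fun h => hm ⟨⟨m, h⟩, by ext; simp⟩
    simp only [E, dif_neg this]
  have hinj := Fin.castLE_injective hL
  have hs1 : ∀ j, ∑ m, E j m = ∑ m, (j m : ℕ) := fun j =>
    (Fintype.sum_of_injective _ hinj _ _ (hE0 j) fun m => (hE j m).symm).symm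
  have hs2 : ∀ j, ∑ m : Fin N, ((m : ℕ) + 1) * E j m
      = ∑ m : Fin (n - k + 1), ((m : ℕ) + 1) * (j m : ℕ) := fun j =>
    (Fintype.sum_of_injective _ hinj _ _ (fun m hm => by simp [hE0 j m hm])
      fun m => by simp [hE]).symm
  rw [bellPartial, Finset.mul_sum]
  refine Finset.sum_of_injOn E ?_ ?_ ?_ ?_
  · intro j _ j' _ h
    ext m
    rw [← hE, ← hE, h]
  · intro j hj
    simp only [Finset.coe_filter, Finset.mem_univ, true_and, Set.mem_ofPred_eq] at hj
    simp only [Finset.coe_filter, mem_weightedTuples, Set.mem_ofPred_eq, hs1, hs2]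
    exact hj.symm
  · intro j hj hj'
    refine absurd ?_ hj'
    obtain ⟨hw, hc⟩ := Finset.mem_filter.1 hj
    rw [mem_weightedTuples] at hw
    have hw' : ∑ m : Fin N, (m : ℕ) * j m + k = n := by
      rw [← hw, ← hc, ← Finset.sum_add_distrib]
      exact Finset.sum_congr rfl fun m _ => by ring
    have hz : ∀ m : Fin N, ¬ (m : ℕ) < n - k + 1 → j m = 0 := by
      intro m hm
      by_contra h0
      have h := Finset.single_le_sum (f := fun m : Fin N => (m : ℕ) * j m)
        (fun _ _ => Nat.zero_le _) (Finset.mem_univ m)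
      have := Nat.le_mul_of_pos_right (m : ℕ) (Nat.pos_of_ne_zero h0)
      omega
    have hb : ∀ m, j m < n + 1 := fun m => by
      have h := Finset.single_le_sum (f := j) (fun _ _ => Nat.zero_le _) (Finset.mem_univ m)
      omega
    obtain ⟨j', hj0⟩ : ∃ j', E j' = j := by
      refine ⟨fun m => ⟨j (Fin.castLE hL m), hb _⟩, ?_⟩
      ext m
      by_cases h : (m : ℕ) < n - k + 1
      · simp only [E, dif_pos h]
        rfl
      · simp only [E, dif_neg h, hz m h]
    refine ⟨j', ?_, hj0⟩
    simp only [Finset.coe_filter, Finset.mem_univ, true_and, Set.mem_ofPred_eq]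
    rw [← hs1, ← hs2, hj0]
    exact ⟨hc, hw⟩
  · intro j _
    have : tupleWeight (fun m => x m / (m.factorial : ℝ)) (E j)
        = ∏ m : Fin (n - k + 1), (x (m + 1) / (((m : ℕ) + 1).factorial : ℝ)) ^ (j m : ℕ)
            / ((j m : ℕ).factorial : ℝ) :=
      (Fintype.prod_of_injective _ hinj _ _ (fun m hm => by simp [hE0 j m hm])
        fun m => by simp [hE]).symm
    rw [this, Finset.prod_div_distrib]
    ring

lemma bellComplete_eq {N n : ℕ} (hN : n ≤ N) (x : ℕ → ℝ) :
    bellComplete n x = n.factorial * expCoeff N (fun m => x m / (m.factorial : ℝ)) n := by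
  rcases Nat.eq_zero_or_pos n with rfl | hn
  · simp [bellComplete, expCoeff_zero]
  rw [bellComplete, if_neg hn.ne', expCoeff,
    ← Finset.sum_fiberwise_of_maps_to (t := Finset.Icc 1 n) (g := fun j : Fin N → ℕ => ∑ m, j m),
    Finset.mul_sum]
  · refine Finset.sum_congr rfl fun k hk => ?_
    rw [Finset.mem_Icc] at hk
    exact bellPartial_eq hk.1 hk.2 hN x
  · intro j hj
    rw [mem_weightedTuples] at hj
    rw [Finset.mem_Icc, Nat.one_le_iff_ne_zero]
    constructor
    · intro h0
      simp only [Finset.sum_eq_zero_iff, Finset.mem_univ, true_imp_iff] at h0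
      simp [h0] at hj
      omega
    · rw [← hj]
      exact Finset.sum_le_sum fun m _ => Nat.le_mul_of_pos_left _ (Nat.succ_pos _)

/-- The recursion `B_{n+1} = ∑ C(n,k) x_{k+1} B_{n-k}`, which with `B_0 = 1` determines the complete Bell
polynomials. -/
lemma bellComplete_succ (n : ℕ) (x : ℕ → ℝ) :
    bellComplete (n + 1) x
      = ∑ k ∈ Finset.range (n + 1), (n.choose k : ℝ) * x (k + 1) * bellComplete (n - k) x := by
  rw [bellComplete_eq le_rfl, Nat.factorial_succ, Nat.cast_mul, mul_comm ((n + 1 : ℕ) : ℝ),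
    mul_assoc, Nat.cast_succ, succ_mul_expCoeff_succ n.lt_succ_self, Finset.mul_sum]
  refine Finset.sum_congr rfl fun k hk => ?_
  have hk : k ≤ n := by simp at hk; omega
  rw [bellComplete_eq (N := n + 1) (by omega), Nat.cast_choose ℝ hk, Nat.factorial_succ]
  push_cast
  field_simp

/-! ### Iterated derivatives of `e^α` -/

/-- Faà di Bruno's formula for `exp ∘ α`: by the Leibniz rule applied to `(e^α)' = α' e^α`, the
functions `e^{-α} (e^α)^{(n)}` satisfy the Bell recursion. -/
lemma iteratedDeriv_exp_comp {α : ℝ → ℝ} (hα : ContDiff ℝ (⊤ : ℕ∞) α) (x : ℝ) (n : ℕ) :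
    iteratedDeriv n (fun t => Real.exp (α t)) x
      = Real.exp (α x) * bellComplete n (fun m => iteratedDeriv m α x) := by
  induction n using Nat.strong_induction_on with
  | _ n ih =>
  cases n with
  | zero => simp [bellComplete]
  | succ n =>
    have hd : deriv (fun t => Real.exp (α t)) = deriv α * fun t => Real.exp (α t) := by
      ext t
      rw [deriv_exp ((hα.differentiable (by simp)) t), Pi.mul_apply, mul_comm]
    have hα' : ContDiff ℝ n (deriv α) := by
      have : ContDiff ℝ (n + 1) α := hα.of_le (by exact_mod_cast le_top)
      exact (contDiff_succ_iff_deriv.1 this).2.2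
    have he : ContDiff ℝ n (fun t => Real.exp (α t)) :=
      (hα.of_le (by exact_mod_cast le_top)).exp
    rw [iteratedDeriv_succ', hd, iteratedDeriv_mul hα'.contDiffAt he.contDiffAt,
      bellComplete_succ, Finset.mul_sum]
    refine Finset.sum_congr rfl fun k _ => ?_
    rw [ih (n - k) (by omega), ← iteratedDeriv_succ']
    ring

/-- The gauge transformation of `D_x^i` by `e^α`:
`e^{-α} · (e^α u)^{(i)} = ∑_{k=0}^i C(i,k) B_{i-k}(α', …, α^{(i-k)}) u^{(k)}`. -/
theorem gauge_transform_Dx_pow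
    (α u : ℝ → ℝ) (hα : ContDiff ℝ (⊤ : ℕ∞) α) (hu : ContDiff ℝ (⊤ : ℕ∞) u)
    (i : ℕ) (x : ℝ) :
    Real.exp (-(α x)) * iteratedDeriv i (fun t => Real.exp (α t) * u t) x
      = ∑ k ∈ Finset.range (i + 1),
          (i.choose k : ℝ) * bellComplete (i - k) (fun m => iteratedDeriv m α x)
            * iteratedDeriv k u x := by
  have hu' : ContDiff ℝ i u := hu.of_le (by exact_mod_cast le_top)
  have he : ContDiff ℝ i (fun t => Real.exp (α t)) :=
    (hα.of_le (by exact_mod_cast le_top)).exp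
  have hcomm : (fun t => Real.exp (α t) * u t) = u * fun t => Real.exp (α t) := by
    ext t
    simp [mul_comm]
  rw [hcomm, iteratedDeriv_mul hu'.contDiffAt he.contDiffAt, Finset.mul_sum]
  refine Finset.sum_congr rfl fun k _ => ?_
  rw [iteratedDeriv_exp_comp hα, Real.exp_neg]
  field_simp
end

section
/- (Invariance part of Theorem 1.) Let d ≥ 1, and let a, b, α and m_i (i = −d, …, d) be smooth (C^∞) functions ℝ² → ℝ. Define the gauge-transformed data: a' = a + ∂_y α, b' = b + ∂_x α, and m'_k = Σ_{i=k}^{d} C(i,k) m_i B_{i−k}(∂_x α, …, ∂_x^{i−k}α) for 1 ≤ k ≤ d, m'_{−k} = Σ_{i=k}^{d} C(i,k) m_{−i} B_{i−k}(∂_y α, …, ∂_y^{i−k}α) for 1 ≤ k ≤ d, and m'_0 = m_0 + Σ_{i=1}^{d} ( m_i B_i(∂_x α, …, ∂_x^{i}α) + m_{−i} B_i(∂_y α, …, ∂_y^{i}α) ). Define R_j(m, b) = Σ_{w=j}^{d} m_w C(w,j) B_{w−j}(−b, −∂_x b, …, −∂_x^{w−j−1}b) for 1 ≤ j ≤ d,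 R_{−j}(m, a) = Σ_{w=j}^{d} m_{−w} C(w,j) B_{w−j}(−a, −∂_y a, …, −∂_y^{w−j−1}a) for 1 ≤ j ≤ d, and R_0(m, a, b) = m_0 + Σ_{w=1}^{d} ( m_w B_w(−b, −∂_x b, …, −∂_x^{w−1}b) + m_{−w} B_w(−a, −∂_y a, …, −∂_y^{w−1}a) ). Then at every point of ℝ²: R_j(m', b') = R_j(m, b) and R_{−j}(m', a') = R_{−j}(m, a) for all 1 ≤ j ≤ d, and R_0(m', a', b') = R_0(m, a, b). That is, the 2d+1 functions R_{−d}, …, R_0, …, R_d are joint differential invariants of the pair (L, M) under gauge transformations. -/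
/-- Partial derivative with respect to the first variable. -/
noncomputable def pdx (f : ℝ × ℝ → ℝ) : ℝ × ℝ → ℝ :=
  fun p => deriv (fun t => f (t, p.2)) p.1

/-- Partial derivative with respect to the second variable. -/
noncomputable def pdy (f : ℝ × ℝ → ℝ) : ℝ × ℝ → ℝ :=
  fun p => deriv (fun t => f (p.1, t)) p.2

/-- `R_j(m, b) = ∑_{w=j}^d m_w C(w,j) B_{w-j}(-b, -∂_x b, …, -∂_x^{w-j-1} b)`,
where `m w` is the coefficient `m_w`. -/
noncomputable def Rpos (d j : ℕ) (m : ℕ → ℝ × ℝ → ℝ) (b : ℝ × ℝ → ℝ) : ℝ × ℝ → ℝ :=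
  fun p => ∑ w ∈ Finset.Icc j d,
    m w p * (w.choose j : ℝ) * bellComplete (w - j) (fun s => -(pdx^[s - 1] b p))

/-- `R_{-j}(m, a) = ∑_{w=j}^d m_{-w} C(w,j) B_{w-j}(-a, -∂_y a, …, -∂_y^{w-j-1} a)`,
where `m w` is the coefficient `m_{-w}`. -/
noncomputable def Rneg (d j : ℕ) (m : ℕ → ℝ × ℝ → ℝ) (a : ℝ × ℝ → ℝ) : ℝ × ℝ → ℝ :=
  fun p => ∑ w ∈ Finset.Icc j d,
    m w p * (w.choose j : ℝ) * bellComplete (w - j) (fun s => -(pdy^[s - 1] a p))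

/-- `R_0(m, a, b) = m_0 + ∑_{w=1}^d (m_w B_w(-b, …, -∂_x^{w-1} b) + m_{-w} B_w(-a, …, -∂_y^{w-1} a))`. -/
noncomputable def Rzero (d : ℕ) (mpos mneg : ℕ → ℝ × ℝ → ℝ) (m0 a b : ℝ × ℝ → ℝ) :
    ℝ × ℝ → ℝ :=
  fun p => m0 p + ∑ w ∈ Finset.Icc 1 d,
    (mpos w p * bellComplete w (fun s => -(pdx^[s - 1] b p))
      + mneg w p * bellComplete w (fun s => -(pdy^[s - 1] a p)))

/-! ### Generating functions of Bell polynomials -/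

/-- The exponential generating function `∑_{m ≥ 1} x_m t^m / m!` divided by `t`, so that
`X * bellSeries x` visibly has no constant term; `x 0` is not used. -/
noncomputable def bellSeries (x : ℕ → ℝ) : PowerSeries ℝ :=
  PowerSeries.mk fun m => x (m + 1) / ((m + 1).factorial : ℝ)

/-- The multinomial theorem in generating-function form: `B_{n,k}` is `n!/k!` times the
coefficient of `t^n` in `(∑_{m ≥ 1} x_m t^m / m!)^k`. Only the first `n - k + 1` terms of the
series matter, which is why it may be truncated to a polynomial. -/
lemma bellPartial_eq_coeff (n k : ℕ) (hk : k ≤ n) (x : ℕ → ℝ) :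
    bellPartial n k x =
      (n.factorial : ℝ) / k.factorial *
        PowerSeries.coeff n ((PowerSeries.X * bellSeries x) ^ k) := by
  obtain ⟨y, hy⟩ : ∃ y : ℕ → ℝ, ∀ m, x (m + 1) / ((m + 1).factorial : ℝ) = y m :=
    ⟨_, fun _ => rfl⟩
  simp only [bellPartial, hy]
  obtain ⟨N, hN⟩ : ∃ N, n - k + 1 = N := ⟨_, rfl⟩
  rw [hN]
  have h1 : PowerSeries.coeff n ((PowerSeries.X * bellSeries x) ^ k)
      = ((PowerSeries.trunc N (bellSeries x)) ^ k).coeff (n - k) := by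
    have h0 : PowerSeries.coeff (n - k) ((bellSeries x) ^ k) =
        PowerSeries.coeff (n - k) (((PowerSeries.trunc N (bellSeries x) : Polynomial ℝ) :
          PowerSeries ℝ) ^ k) := by
      have := PowerSeries.trunc_trunc_pow (bellSeries x) N k
      have h2 := congrArg (fun q => Polynomial.coeff q (n - k)) this
      simp only [PowerSeries.coeff_trunc] at h2
      rw [if_pos (by omega), if_pos (by omega)] at h2
      exact h2.symm
    rw [mul_pow, PowerSeries.coeff_X_pow_mul', if_pos hk, h0, ← Polynomial.coe_pow,
      Polynomial.coeff_coe]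
  have h2 : PowerSeries.trunc N (bellSeries x)
      = ∑ m : Fin N, Polynomial.monomial (m : ℕ) (y m) := by
    ext r
    simp only [PowerSeries.coeff_trunc, bellSeries, PowerSeries.coeff_mk, hy,
      Polynomial.finsetSum_coeff, Polynomial.coeff_monomial]
    rw [Finset.sum_fin_eq_sum_range]
    trans ∑ i ∈ Finset.range N, if i = r then y r else 0
    · simp
    · refine Finset.sum_congr rfl fun i hi => ?_
      rw [dif_pos (Finset.mem_range.mp hi)]
      split_ifs with h
      · exact congrArg y h.symm
      · rfl
  have h3 : ∀ c : Fin N → ℕ, Polynomial.coeff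
      (∏ m : Fin N, (Polynomial.monomial (m : ℕ) (y m)) ^ c m) (n - k)
      = if ∑ m : Fin N, (m : ℕ) * c m = n - k then ∏ m : Fin N, y m ^ c m else 0 := by
    intro c
    have : ∏ m : Fin N, (Polynomial.monomial (m : ℕ) (y m)) ^ c m
        = Polynomial.monomial (∑ m : Fin N, (m : ℕ) * c m) (∏ m : Fin N, y m ^ c m) := by
      simp only [← Polynomial.C_mul_X_pow_eq_monomial, mul_pow, ← pow_mul,
        Finset.prod_mul_distrib, Finset.prod_pow_eq_pow_sum, map_prod, map_pow]
    rw [this, Polynomial.coeff_monomial]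
  rw [h1, h2, Finset.sum_pow_eq_sum_piAntidiag, Polynomial.finsetSum_coeff, Finset.mul_sum]
  simp only [← Polynomial.C_eq_natCast, Polynomial.coeff_C_mul, h3]
  simp only [mul_ite, mul_zero]
  rw [← Finset.sum_filter]
  refine Finset.sum_bij (fun j _ m => (j m : ℕ)) ?_ ?_ ?_ ?_
  · intro j hj
    simp only [Finset.mem_filter, Finset.mem_univ, true_and, add_mul, one_mul,
      Finset.sum_add_distrib] at hj
    simp only [Finset.mem_filter, Finset.mem_piAntidiag, Finset.mem_univ, implies_true, and_true]
    exact ⟨hj.1, by have := hj.2; omega⟩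
  · intro j _ j' _ h
    ext m
    exact congrFun h m
  · intro c hc
    simp only [Finset.mem_filter, Finset.mem_piAntidiag, Finset.mem_univ, implies_true,
      and_true] at hc
    have h4 : ∑ m, c m = k := hc.1
    have h5 := hc.2
    have hle : ∀ m, c m < n + 1 := by
      intro m
      have := Finset.single_le_sum (f := c) (fun i _ => Nat.zero_le _) (Finset.mem_univ m)
      omega
    refine ⟨fun m => ⟨c m, hle m⟩, ?_, rfl⟩
    simp only [Finset.mem_filter, Finset.mem_univ, true_and, add_mul, one_mul,
      Finset.sum_add_distrib]
    exact ⟨h4, by omega⟩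
  · intro j hj
    simp only [Finset.mem_filter, Finset.mem_univ, true_and] at hj
    have hm : (Nat.multinomial Finset.univ (fun m => (j m : ℕ)) : ℝ)
        = k.factorial / ∏ m : Fin N, ((j m : ℕ).factorial : ℝ) := by
      have := Nat.multinomial_spec Finset.univ (fun m => (j m : ℕ))
      rw [hj.1] at this
      rw [eq_div_iff (Finset.prod_ne_zero_iff.mpr fun m _ => by positivity), mul_comm]
      exact_mod_cast this
    rw [hm]
    have : (k.factorial : ℝ) ≠ 0 := by positivity
    field_simp

/-- `B_n / n!` is the coefficient of `t^n` in the truncated exponential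
`∑_{k < N} f^k / k!` of `f = ∑_{m ≥ 1} x_m t^m / m!`, for any `N > n`. -/
lemma bellComplete_eq_sum (n N : ℕ) (hN : n < N) (x : ℕ → ℝ) :
    bellComplete n x = (n.factorial : ℝ) * ∑ k ∈ Finset.range N,
      PowerSeries.coeff n ((PowerSeries.X * bellSeries x) ^ k) / (k.factorial : ℝ) := by
  have hz : ∀ k, n < k → PowerSeries.coeff n ((PowerSeries.X * bellSeries x) ^ k) = 0 := by
    intro k hk
    rw [mul_pow, PowerSeries.coeff_X_pow_mul', if_neg (by omega)]
  have hs : ∑ k ∈ Finset.range N,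
      PowerSeries.coeff n ((PowerSeries.X * bellSeries x) ^ k) / (k.factorial : ℝ)
      = ∑ k ∈ Finset.range (n + 1),
      PowerSeries.coeff n ((PowerSeries.X * bellSeries x) ^ k) / (k.factorial : ℝ) := by
    symm
    apply Finset.sum_subset
    · exact Finset.range_mono hN
    · intro k _ hk
      rw [hz k (by simpa using hk), zero_div]
  rw [hs, bellComplete]
  split_ifs with h
  · subst h; simp
  · rw [Finset.sum_range_eq_add_Ico _ (by omega)]
    have : PowerSeries.coeff n ((PowerSeries.X * bellSeries x) ^ 0) = 0 := by
      simp [PowerSeries.coeff_one, h]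
    rw [this, zero_div, zero_add, Finset.mul_sum]
    refine Finset.sum_congr (by ext; simp) fun k hk => ?_
    rw [bellPartial_eq_coeff n k (by simp at hk; omega)]
    ring

/-! ### The binomial-type identity -/

/-- The functional equation `exp (f + g) = exp f * exp g`, coefficientwise, for power series
`f`, `g` without constant term; the exponentials may be truncated at any order `N > n`. -/
lemma coeff_exp_add (n N : ℕ) (hN : n < N) (f g : PowerSeries ℝ)
    (hf : PowerSeries.X ∣ f) (hg : PowerSeries.X ∣ g) :
    ∑ k ∈ Finset.range N, PowerSeries.coeff n ((f + g) ^ k) / (k.factorial : ℝ)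
      = ∑ i ∈ Finset.range N, ∑ j ∈ Finset.range N,
        PowerSeries.coeff n (f ^ i * g ^ j) / ((i.factorial : ℝ) * j.factorial) := by
  have h1 : ∀ k, PowerSeries.coeff n ((f + g) ^ k) / (k.factorial : ℝ)
      = ∑ q ∈ Finset.HasAntidiagonal.antidiagonal k,
        PowerSeries.coeff n (f ^ q.1 * g ^ q.2) / ((q.1.factorial : ℝ) * q.2.factorial) := by
    intro k
    rw [(Commute.all f g).add_pow', map_sum, Finset.sum_div]
    refine Finset.sum_congr rfl fun q hq => ?_
    rw [Finset.HasAntidiagonal.mem_antidiagonal] at hq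
    subst hq
    rw [map_nsmul, nsmul_eq_mul, Nat.cast_add_choose]
    have : ((q.1 + q.2).factorial : ℝ) ≠ 0 := by positivity
    field_simp
  rw [← Finset.sum_product', Finset.sum_congr rfl fun k _ => h1 k, Finset.sum_sigma']
  refine Finset.sum_bij_ne_zero (fun q _ _ => q.2) ?_ ?_ ?_ ?_
  · rintro ⟨k, i, j⟩ h _
    simp at h ⊢
    omega
  · rintro ⟨k, i, j⟩ h _ ⟨k', i', j'⟩ h' _ he
    simp at h h' he ⊢
    omega
  · rintro ⟨i, j⟩ _ hne
    have hlt : i + j < N := by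
      -- a product of at least `N > n` multiples of `X` has vanishing coefficient at `n`
      by_contra hc
      apply hne
      have hd : (PowerSeries.X : PowerSeries ℝ) ^ (i + j) ∣ f ^ i * g ^ j := by
        rw [pow_add]
        exact mul_dvd_mul (pow_dvd_pow_of_dvd hf i) (pow_dvd_pow_of_dvd hg j)
      rw [PowerSeries.X_pow_dvd_iff.mp hd n (by omega), zero_div]
    exact ⟨⟨i + j, i, j⟩, by simp [hlt], hne, rfl⟩
  · intros; rfl

/-- Complete Bell polynomials are of binomial type:
`B_n(x + y) = ∑_{p+q=n} C(n,p) B_p(x) B_q(y)`. -/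
lemma bellComplete_add (n : ℕ) (x y : ℕ → ℝ) :
    bellComplete n (fun s => x s + y s) = ∑ q ∈ Finset.HasAntidiagonal.antidiagonal n,
      (n.choose q.1 : ℝ) * bellComplete q.1 x * bellComplete q.2 y := by
  have hadd : PowerSeries.X * bellSeries (fun s => x s + y s)
      = PowerSeries.X * bellSeries x + PowerSeries.X * bellSeries y := by
    rw [← mul_add]
    congr 1
    ext m
    simp [bellSeries, add_div]
  rw [bellComplete_eq_sum n (n + 1) (by omega), hadd,
    coeff_exp_add n (n + 1) (by omega) _ _ (dvd_mul_right _ _) (dvd_mul_right _ _)]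
  simp only [PowerSeries.coeff_mul, Finset.sum_div]
  rw [Finset.sum_congr rfl fun i _ => Finset.sum_comm, Finset.sum_comm, Finset.mul_sum]
  refine Finset.sum_congr rfl fun q hq => ?_
  rw [Finset.HasAntidiagonal.mem_antidiagonal] at hq
  rw [bellComplete_eq_sum q.1 (n + 1) (by omega), bellComplete_eq_sum q.2 (n + 1) (by omega)]
  have hc : (n.factorial : ℝ) = n.choose q.1 * q.1.factorial * q.2.factorial := by
    have := Nat.choose_mul_factorial_mul_factorial (show q.1 ≤ n by omega)
    rw [show n - q.1 = q.2 by omega] at this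
    exact_mod_cast this.symm
  rw [hc, show ∀ c s t A B : ℝ, c * (s * A) * (t * B) = c * s * t * (A * B) by intros; ring,
    Finset.sum_mul_sum]
  congr 1
  refine Finset.sum_congr rfl fun i _ => Finset.sum_congr rfl fun j _ => ?_
  rw [div_mul_div_comm]

/-- `bellComplete n x` does not see the value `x 0`. -/
lemma bellComplete_congr (n : ℕ) {x y : ℕ → ℝ} (h : ∀ s, x (s + 1) = y (s + 1)) :
    bellComplete n x = bellComplete n y := by
  simp only [bellComplete, bellPartial, h]

/-! ### Composition of Bell transforms -/

/-- The transformations `M_w ↦ ∑_{i ≥ w} C(i,w) M_i B_{i-w}(u)` compose additively in `u`. -/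
lemma bell_transform_comp (d j : ℕ) (M : ℕ → ℝ) (u v : ℕ → ℝ) :
    ∑ w ∈ Finset.Icc j d,
      (∑ i ∈ Finset.Icc w d, (i.choose w : ℝ) * M i * bellComplete (i - w) u)
        * (w.choose j : ℝ) * bellComplete (w - j) v
      = ∑ i ∈ Finset.Icc j d,
        M i * (i.choose j : ℝ) * bellComplete (i - j) (fun s => v s + u s) := by
  simp only [Finset.sum_mul]
  rw [Finset.sum_comm' (t' := Finset.Icc j d) (s' := fun i => Finset.Icc j i)
    (by intro w i; simp only [Finset.mem_Icc]; omega)]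
  refine Finset.sum_congr rfl fun i hi => ?_
  rw [Finset.mem_Icc] at hi
  rw [bellComplete_add, Finset.Nat.sum_antidiagonal_eq_sum_range_succ_mk, Finset.mul_sum]
  have hI : Finset.Icc j i = Finset.Ico j (i + 1) := by ext; simp
  rw [hI, Finset.sum_Ico_eq_sum_range, show i + 1 - j = (i - j).succ by omega]
  refine Finset.sum_congr rfl fun r hr => ?_
  rw [Finset.mem_range] at hr
  have hc : (i.choose (j + r) : ℝ) * ((j + r).choose j) = i.choose j * (i - j).choose r := by
    have := Nat.choose_mul (n := i) (k := j + r) (s := j) (by omega)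
    rw [show j + r - j = r by omega] at this
    exact_mod_cast this
  simp only [show j + r - j = r by omega, show i - (j + r) = i - j - r by omega]
  linear_combination (M i * bellComplete (i - j - r) u * bellComplete r v) * hc

/-- The case `j = 0` of `bell_transform_comp`, with the terms `M 0` cancelled on both sides. -/
lemma bell_transform_comp_zero (d : ℕ) (M : ℕ → ℝ) (u v : ℕ → ℝ) :
    ∑ i ∈ Finset.Icc 1 d, M i * bellComplete i u
      + ∑ w ∈ Finset.Icc 1 d,
        (∑ i ∈ Finset.Icc w d, (i.choose w : ℝ) * M i * bellComplete (i - w) u)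
          * bellComplete w v
      = ∑ i ∈ Finset.Icc 1 d, M i * bellComplete i (fun s => v s + u s) := by
  have h := bell_transform_comp d 0 M u v
  have hI : ∀ F : ℕ → ℝ, ∑ i ∈ Finset.Icc 0 d, F i = F 0 + ∑ i ∈ Finset.Icc 1 d, F i := by
    intro F
    rw [← Finset.sum_Ioc_add_eq_sum_Icc (Nat.zero_le d), add_comm]
    rfl
  rw [hI, hI, hI] at h
  simp only [Nat.choose_zero_right, Nat.cast_one, Nat.sub_zero, mul_one, one_mul,
    show ∀ z, bellComplete 0 z = 1 from fun z => by simp [bellComplete]] at h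
  linarith

/-! ### Partial derivatives and the gauge terms -/

lemma contDiff_pdx {f : ℝ × ℝ → ℝ} (hf : ContDiff ℝ (⊤ : ℕ∞) f) :
    ContDiff ℝ (⊤ : ℕ∞) (pdx f) := by
  have h : pdx f = fun p => fderiv ℝ f p (1, 0) := by
    funext p
    have h1 : HasFDerivAt f (fderiv ℝ f p) (p.1, p.2) :=
      (hf.differentiable (by simp)).differentiableAt.hasFDerivAt
    have h2 : HasDerivAt (fun t : ℝ => (t, p.2)) ((1 : ℝ), (0 : ℝ)) p.1 :=
      (hasDerivAt_id p.1).prodMk (hasDerivAt_const p.1 p.2)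
    exact (h1.comp_hasDerivAt p.1 h2).deriv
  rw [h]
  exact (hf.fderiv_right (by simp)).clm_apply contDiff_const

lemma contDiff_pdy {f : ℝ × ℝ → ℝ} (hf : ContDiff ℝ (⊤ : ℕ∞) f) :
    ContDiff ℝ (⊤ : ℕ∞) (pdy f) := by
  have h : pdy f = fun p => fderiv ℝ f p (0, 1) := by
    funext p
    have h1 : HasFDerivAt f (fderiv ℝ f p) (p.1, p.2) :=
      (hf.differentiable (by simp)).differentiableAt.hasFDerivAt
    have h2 : HasDerivAt (fun t : ℝ => (p.1, t)) ((0 : ℝ), (1 : ℝ)) p.2 :=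
      (hasDerivAt_const p.2 p.1).prodMk (hasDerivAt_id p.2)
    exact (h1.comp_hasDerivAt p.2 h2).deriv
  rw [h]
  exact (hf.fderiv_right (by simp)).clm_apply contDiff_const

lemma pdx_add {f g : ℝ × ℝ → ℝ} (hf : ContDiff ℝ (⊤ : ℕ∞) f) (hg : ContDiff ℝ (⊤ : ℕ∞) g) :
    pdx (fun p => f p + g p) = fun p => pdx f p + pdx g p := by
  funext p
  have hl : Differentiable ℝ fun t : ℝ => (t, p.2) := by fun_prop
  exact deriv_fun_add ((hf.differentiable (by simp)).comp hl).differentiableAt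
    ((hg.differentiable (by simp)).comp hl).differentiableAt

lemma pdy_add {f g : ℝ × ℝ → ℝ} (hf : ContDiff ℝ (⊤ : ℕ∞) f) (hg : ContDiff ℝ (⊤ : ℕ∞) g) :
    pdy (fun p => f p + g p) = fun p => pdy f p + pdy g p := by
  funext p
  have hl : Differentiable ℝ fun t : ℝ => (p.1, t) := by fun_prop
  exact deriv_fun_add ((hf.differentiable (by simp)).comp hl).differentiableAt
    ((hg.differentiable (by simp)).comp hl).differentiableAt

/-- An operator that preserves smoothness and is additive on smooth functions has additive
iterates. -/
lemma iterate_add_of_smooth {D : (ℝ × ℝ → ℝ) → ℝ × ℝ → ℝ}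
    (hD : ∀ f, ContDiff ℝ (⊤ : ℕ∞) f → ContDiff ℝ (⊤ : ℕ∞) (D f))
    (hadd : ∀ f g, ContDiff ℝ (⊤ : ℕ∞) f → ContDiff ℝ (⊤ : ℕ∞) g →
      D (fun p => f p + g p) = fun p => D f p + D g p)
    (s : ℕ) : ∀ f g, ContDiff ℝ (⊤ : ℕ∞) f → ContDiff ℝ (⊤ : ℕ∞) g →
      D^[s] (fun p => f p + g p) = fun p => D^[s] f p + D^[s] g p := by
  induction s with
  | zero => intros; rfl
  | succ s ih =>
    intro f g hf hg
    simp only [Function.iterate_succ_apply]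
    rw [hadd f g hf hg, ih _ _ (hD f hf) (hD g hg)]

/-- In `-∂^{s-1}(b + ∂α) + ∂^s α` the gauge terms cancel for `s ≥ 1`. -/
lemma bell_gauge_cancel {D : (ℝ × ℝ → ℝ) → ℝ × ℝ → ℝ}
    (hD : ∀ f, ContDiff ℝ (⊤ : ℕ∞) f → ContDiff ℝ (⊤ : ℕ∞) (D f))
    (hadd : ∀ f g, ContDiff ℝ (⊤ : ℕ∞) f → ContDiff ℝ (⊤ : ℕ∞) g →
      D (fun p => f p + g p) = fun p => D f p + D g p)
    {b α : ℝ × ℝ → ℝ} (hb : ContDiff ℝ (⊤ : ℕ∞) b) (hα : ContDiff ℝ (⊤ : ℕ∞) α)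
    (n : ℕ) (p : ℝ × ℝ) :
    bellComplete n (fun s => -(D^[s - 1] (fun p => b p + D α p) p) + D^[s] α p)
      = bellComplete n (fun s => -(D^[s - 1] b p)) := by
  refine bellComplete_congr n fun s => ?_
  simp only [Nat.add_sub_cancel, iterate_add_of_smooth hD hadd s b (D α) hb (hD α hα),
    Function.iterate_succ_apply]
  ring

/-! ### Gauge invariance -/

/-- Invariance part of Theorem 1: the `2d+1` functions
`R_{-d}, …, R_0, …, R_d` are joint differential invariants of the pair `(L, M)`
under gauge transformations. -/
theorem R_invariants_gauge_invariant
    (d : ℕ) (hd : 1 ≤ d)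
    (a b α : ℝ × ℝ → ℝ) (m : ℤ → ℝ × ℝ → ℝ)
    (ha : ContDiff ℝ (⊤ : ℕ∞) a) (hb : ContDiff ℝ (⊤ : ℕ∞) b)
    (hα : ContDiff ℝ (⊤ : ℕ∞) α) (hm : ∀ i : ℤ, ContDiff ℝ (⊤ : ℕ∞) (m i))
    (a' b' : ℝ × ℝ → ℝ) (mP mN : ℕ → ℝ × ℝ → ℝ) (m0' : ℝ × ℝ → ℝ)
    (ha' : a' = fun p => a p + pdy α p)
    (hb' : b' = fun p => b p + pdx α p)
    (hmP : mP = fun k p => ∑ i ∈ Finset.Icc k d,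
      (i.choose k : ℝ) * m (i : ℤ) p * bellComplete (i - k) (fun s => pdx^[s] α p))
    (hmN : mN = fun k p => ∑ i ∈ Finset.Icc k d,
      (i.choose k : ℝ) * m (-(i : ℤ)) p * bellComplete (i - k) (fun s => pdy^[s] α p))
    (hm0' : m0' = fun p => m 0 p + ∑ i ∈ Finset.Icc 1 d,
      (m (i : ℤ) p * bellComplete i (fun s => pdx^[s] α p)
        + m (-(i : ℤ)) p * bellComplete i (fun s => pdy^[s] α p))) :
    (∀ j, 1 ≤ j → j ≤ d → ∀ p : ℝ × ℝ,
        Rpos d j mP b' p = Rpos d j (fun w => m (w : ℤ)) b p)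
    ∧ (∀ j, 1 ≤ j → j ≤ d → ∀ p : ℝ × ℝ,
        Rneg d j mN a' p = Rneg d j (fun w => m (-(w : ℤ))) a p)
    ∧ (∀ p : ℝ × ℝ,
        Rzero d mP mN m0' a' b' p
          = Rzero d (fun w => m (w : ℤ)) (fun w => m (-(w : ℤ))) (m 0) a b p) := by
  have cx := fun n p => bell_gauge_cancel (D := pdx) (fun _ => contDiff_pdx)
    (fun _ _ => pdx_add) hb hα n p
  have cy := fun n p => bell_gauge_cancel (D := pdy) (fun _ => contDiff_pdy)
    (fun _ _ => pdy_add) ha hα n p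
  subst ha' hb' hmP hmN hm0'
  refine ⟨fun j _ _ p => ?_, fun j _ _ p => ?_, fun p => ?_⟩
  · simp only [Rpos]
    rw [bell_transform_comp d j (fun i => m (i : ℤ) p)]
    simp only [cx]
  · simp only [Rneg]
    rw [bell_transform_comp d j (fun i => m (-(i : ℤ)) p)]
    simp only [cy]
  · have hx := bell_transform_comp_zero d (fun i => m (i : ℤ) p) (fun s => pdx^[s] α p)
      (fun s => -(pdx^[s - 1] (fun p => b p + pdx α p) p))
    have hy := bell_transform_comp_zero d (fun i => m (-(i : ℤ)) p) (fun s => pdy^[s] α p)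
      (fun s => -(pdy^[s - 1] (fun p => a p + pdy α p) p))
    simp only [cx] at hx
    simp only [cy] at hy
    simp only [Rzero, Finset.sum_add_distrib]
    linarith
end
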